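/- arXiv:1802.01793 — 4 statements merged into one kernel-verified Lean document; each statement's English description precedes it below -/
import Mathlib

section
/- For every integer j and every natural number k, s_k(j² − 2) = r_k(j) · s_k(j). -/
/-- The sequence `s_k(n)`: `s_0 = 1`, `s_1 = n + 1`, `s_{k+2} = n·s_{k+1} − s_k`. -/
def s (n : ℤ) : ℕ → ℤ
  | 0 => 1
  | 1 => n + 1
  | k + 2 => n * s n (k + 1) - s n k

/-- The sequence `r_k(n)`: `r_0 = 1`, `r_1 = n − 1`, `r_{k+2} = n·r_{k+1} − r_k`. -/
def r (n : ℤ) : ℕ → ℤ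
  | 0 => 1
  | 1 => n - 1
  | k + 2 => n * r n (k + 1) - r n k

/-- Dilated Chebyshev polynomials of the first kind: `T_0 = 2`, `T_1 = n`. -/
def T (n : ℤ) : ℕ → ℤ
  | 0 => 2
  | 1 => n
  | k + 2 => n * T n (k + 1) - T n k

/-- Dilated Chebyshev polynomials of the second kind: `U_0 = 1`, `U_1 = n`. -/
def U (n : ℤ) : ℕ → ℤ
  | 0 => 1
  | 1 => n
  | k + 2 => n * U n (k + 1) - U n k

/-!
Let `S_n` be the rescaled Chebyshev polynomials of the second kind, for which
`S_n(2 cos θ) = sin ((n + 1) θ) / sin θ`. Both sides of the factorization equal `S_{2k}(j)`.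
If `j = 2 cos θ`, then `s_k(j) = sin ((k + 1/2) θ) / sin (θ / 2)` and `j² - 2 = 2 cos 2θ`, so
doubling the angle gives `s_k(j² - 2) = sin ((2k + 1) θ) / sin θ = S_{2k}(j)`. Algebraically, both
sequences in `k` satisfy `x_{k+2} = (j² - 2) x_{k+1} - x_k`. On the other side, the addition formula
for `S` gives `S_{2k} = S_k² - S_{k-1}²`, whose factors are `r_k = S_k - S_{k-1}` and
`s_k = S_k + S_{k-1}`.
-/

section Chebyshev

open Polynomial

variable (R : Type*) [CommRing R]

theorem chebyshevS_add (m n : ℤ) :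
    Chebyshev.S R (m + n) =
      Chebyshev.S R m * Chebyshev.S R n - Chebyshev.S R (m - 1) * Chebyshev.S R (n - 1) := by
  induction m using Chebyshev.induct with
  | zero => simp
  | one =>
    rw [add_comm, Chebyshev.S_add_one, Chebyshev.S_one, sub_self, Chebyshev.S_zero, one_mul]
  | add_two m ih₁ ih₀ =>
    have h_sum := Chebyshev.S_add_two R (m + n)
    have h_left := Chebyshev.S_add_two R m
    have h_shift := Chebyshev.S_add_one R m
    linear_combination (norm := ring_nf) h_sum + (X : R[X]) * ih₁ - ih₀
      - Chebyshev.S R n * h_left + Chebyshev.S R (n - 1) * h_shift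
  | neg_add_one m ih₀ ih₁ =>
    have h_sum := Chebyshev.S_sub_one R (-m + n)
    have h_left := Chebyshev.S_sub_one R (-m)
    have h_shift := Chebyshev.S_sub_two R (-m)
    linear_combination (norm := ring_nf) h_sum + (X : R[X]) * ih₀ - ih₁
      - Chebyshev.S R n * h_left + Chebyshev.S R (n - 1) * h_shift

theorem chebyshevC_eq_chebyshevS_sub (n : ℤ) :
    Chebyshev.C R n = Chebyshev.S R n - Chebyshev.S R (n - 2) := by
  rw [Chebyshev.C_eq_S_sub_X_mul_S, Chebyshev.S_sub_two]
  ring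

theorem chebyshevC_mul_chebyshevS (m n : ℤ) :
    Chebyshev.C R m * Chebyshev.S R n = Chebyshev.S R (n + m) + Chebyshev.S R (n - m) := by
  rw [sub_eq_add_neg n m, chebyshevS_add, chebyshevS_add, Chebyshev.S_neg,
    Chebyshev.S_neg_sub_one, chebyshevC_eq_chebyshevS_sub]
  ring

/-- The rescaled Chebyshev polynomials of the third kind,
`V_n(2 cos θ) = cos ((n + 1/2) θ) / cos (θ / 2)`, whose values at `j` are the `r_k(j)`. As for
`Polynomial.Chebyshev.S`, the index runs over `ℤ`. -/
noncomputable def chebyshevV (n : ℤ) : R[X] :=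
  Chebyshev.S R n - Chebyshev.S R (n - 1)

/-- The rescaled Chebyshev polynomials of the fourth kind,
`W_n(2 cos θ) = sin ((n + 1/2) θ) / sin (θ / 2)`, whose values at `j` are the `s_k(j)`. As for
`Polynomial.Chebyshev.S`, the index runs over `ℤ`. -/
noncomputable def chebyshevW (n : ℤ) : R[X] :=
  Chebyshev.S R n + Chebyshev.S R (n - 1)

theorem chebyshevV_add_two (n : ℤ) :
    chebyshevV R (n + 2) = X * chebyshevV R (n + 1) - chebyshevV R n := by
  simp only [chebyshevV]
  linear_combination (norm := ring_nf) Chebyshev.S_add_two R n - Chebyshev.S_add_one R n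

theorem chebyshevW_add_two (n : ℤ) :
    chebyshevW R (n + 2) = X * chebyshevW R (n + 1) - chebyshevW R n := by
  simp only [chebyshevW]
  linear_combination (norm := ring_nf) Chebyshev.S_add_two R n + Chebyshev.S_add_one R n

theorem chebyshevS_two_mul (n : ℤ) :
    Chebyshev.S R (2 * n) = chebyshevV R n * chebyshevW R n := by
  rw [two_mul, chebyshevS_add, chebyshevV, chebyshevW]
  ring

theorem chebyshevW_comp_chebyshevC_two (n : ℤ) :
    (chebyshevW R n).comp (Chebyshev.C R 2) = Chebyshev.S R (2 * n) := by
  induction n using Chebyshev.induct with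
  | zero => simp [chebyshevW]
  | one =>
    simp only [chebyshevW, Chebyshev.S_one, sub_self, Chebyshev.S_zero, Chebyshev.C_two, add_comp,
      X_comp, one_comp, mul_one, Chebyshev.S_two]
    ring
  | add_two n ih₁ ih₀ =>
    have h_double := chebyshevC_mul_chebyshevS R 2 (2 * (n + 1))
    rw [chebyshevW_add_two, sub_comp, mul_comp, X_comp, ih₁, ih₀]
    linear_combination (norm := ring_nf) h_double
  | neg_add_one n ih₀ ih₁ =>
    have h_double := chebyshevC_mul_chebyshevS R 2 (2 * -n)
    have h_rec := congr_arg (comp · (Chebyshev.C R 2)) (chebyshevW_add_two R (-n - 1))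
    simp only [sub_comp, mul_comp, X_comp] at h_rec
    linear_combination (norm := ring_nf) h_rec + Chebyshev.C R 2 * ih₀ - ih₁ + h_double

theorem s_factorization_T2_general (n : ℤ) :
    (chebyshevW R n).comp (X ^ 2 - 2) = chebyshevV R n * chebyshevW R n := by
  rw [← Chebyshev.C_two, chebyshevW_comp_chebyshevC_two, chebyshevS_two_mul]

theorem eval_chebyshevV (j : ℤ) (k : ℕ) : (chebyshevV ℤ k).eval j = r j k := by
  induction k using Nat.twoStepInduction with
  | zero => simp [chebyshevV, r]
  | one => simp [chebyshevV, r]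
  | more k ih₀ ih₁ =>
    push_cast at ih₁ ⊢
    rw [chebyshevV_add_two, eval_sub, eval_mul, eval_X, ih₁, ih₀, r]

theorem eval_chebyshevW (j : ℤ) (k : ℕ) : (chebyshevW ℤ k).eval j = s j k := by
  induction k using Nat.twoStepInduction with
  | zero => simp [chebyshevW, s]
  | one => simp [chebyshevW, s]
  | more k ih₀ ih₁ =>
    push_cast at ih₁ ⊢
    rw [chebyshevW_add_two, eval_sub, eval_mul, eval_X, ih₁, ih₀, s]

end Chebyshev

theorem s_factorization_T2 (j : ℤ) (k : ℕ) :
    s (j ^ 2 - 2) k = r j k * s j k := by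
  simpa [eval_chebyshevV, eval_chebyshevW] using
    congr_arg (Polynomial.eval j) (s_factorization_T2_general ℤ k)
end

section
/- Let ℓ ≥ 2 be an integer and set j = 2(ℓ² − 1). Then for every natural number k, with δ_k = (−1)^⌊(k+1)/2⌋: (ℓ² − 1)·r_k(j² − 2) = ℓ²·r_k(j)² − 1, and moreover (ℓ + 1) divides ℓ·r_k(j) + δ_k and (ℓ − 1) divides ℓ·r_k(j) − δ_k, so that r_k(j² − 2) is the product of the two integers (ℓ·r_k(j) + δ_k)/(ℓ + 1) and (ℓ·r_k(j) − δ_k)/(ℓ − 1). -/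
theorem r_add_two (n : ℤ) (k : ℕ) : r n (k + 2) = n * r n (k + 1) - r n k := rfl

theorem r_sq_add_r_succ_sq_sub (n : ℤ) (k : ℕ) :
    r n k ^ 2 + r n (k + 1) ^ 2 - n * r n k * r n (k + 1) = 2 - n := by
  induction k with
  | zero => simp only [r]; ring
  | succ k ih =>
    rw [r_add_two]
    linear_combination ih

theorem mul_r_sq_sub_two (n : ℤ) (k : ℕ) :
    n * r (n ^ 2 - 2) k = (n + 2) * r n k ^ 2 - 2 := by
  induction k using Nat.twoStepInduction with
  | zero => simp only [r]; ring
  | one => simp only [r]; ring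
  | more k ih₀ ih₁ =>
    rw [r_add_two, r_add_two]
    linear_combination (n ^ 2 - 2) * ih₁ - ih₀ - 2 * (n + 2) * r_sq_add_r_succ_sq_sub n k

theorem r_modEq_neg_one_pow (n : ℤ) (k : ℕ) : r n k ≡ (-1) ^ ((k + 1) / 2) [ZMOD n] := by
  induction k using Nat.twoStepInduction with
  | zero => rfl
  | one => exact Int.modEq_of_dvd ⟨-1, by simp only [r]; ring⟩
  | more k ih _ =>
    have hexp : (k + 2 + 1) / 2 = (k + 1) / 2 + 1 := by omega
    calc r n (k + 2) = n * r n (k + 1) - r n k := r_add_two n k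
      _ ≡ 0 - (-1) ^ ((k + 1) / 2) [ZMOD n] :=
        (Int.modEq_zero_iff_dvd.mpr (dvd_mul_right n _)).sub ih
      _ = (-1) ^ ((k + 2 + 1) / 2) := by rw [hexp, pow_succ]; ring

theorem add_one_dvd_mul_r_add {ℓ n : ℤ} (h : ℓ + 1 ∣ n) (k : ℕ) :
    ℓ + 1 ∣ ℓ * r n k + (-1) ^ ((k + 1) / 2) := by
  have hr : ℓ + 1 ∣ r n k - (-1) ^ ((k + 1) / 2) := h.trans (r_modEq_neg_one_pow n k).symm.dvd
  have hsplit : ℓ * r n k + (-1) ^ ((k + 1) / 2)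
      = ℓ * (r n k - (-1) ^ ((k + 1) / 2)) + (ℓ + 1) * (-1) ^ ((k + 1) / 2) := by ring
  rw [hsplit]
  exact dvd_add (hr.mul_left ℓ) (dvd_mul_right _ _)

theorem sub_one_dvd_mul_r_sub {ℓ n : ℤ} (h : ℓ - 1 ∣ n) (k : ℕ) :
    ℓ - 1 ∣ ℓ * r n k - (-1) ^ ((k + 1) / 2) := by
  have hneg : -ℓ + 1 ∣ n := by rwa [neg_add_eq_sub, ← neg_sub, neg_dvd]
  have hdvd := add_one_dvd_mul_r_add hneg k
  rwa [neg_add_eq_sub, ← neg_sub, neg_dvd, neg_mul, neg_add_eq_sub, dvd_sub_comm] at hdvd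

theorem sq_sub_one_mul_r (ℓ : ℤ) (k : ℕ) :
    (ℓ ^ 2 - 1) * r ((2 * (ℓ ^ 2 - 1)) ^ 2 - 2) k
      = ℓ ^ 2 * r (2 * (ℓ ^ 2 - 1)) k ^ 2 - 1 := by
  apply mul_left_cancel₀ (two_ne_zero (α := ℤ))
  linear_combination mul_r_sq_sub_two (2 * (ℓ ^ 2 - 1)) k

theorem r_factorization_special_general (ℓ : ℤ) (hadd : ℓ + 1 ≠ 0) (hsub : ℓ - 1 ≠ 0) (k : ℕ) :
    (ℓ ^ 2 - 1) * r ((2 * (ℓ ^ 2 - 1)) ^ 2 - 2) k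
        = ℓ ^ 2 * (r (2 * (ℓ ^ 2 - 1)) k) ^ 2 - 1 ∧
    (ℓ + 1) ∣ ℓ * r (2 * (ℓ ^ 2 - 1)) k + (-1 : ℤ) ^ ((k + 1) / 2) ∧
    (ℓ - 1) ∣ ℓ * r (2 * (ℓ ^ 2 - 1)) k - (-1 : ℤ) ^ ((k + 1) / 2) ∧
    r ((2 * (ℓ ^ 2 - 1)) ^ 2 - 2) k
        = ((ℓ * r (2 * (ℓ ^ 2 - 1)) k + (-1 : ℤ) ^ ((k + 1) / 2)) / (ℓ + 1))
          * ((ℓ * r (2 * (ℓ ^ 2 - 1)) k - (-1 : ℤ) ^ ((k + 1) / 2)) / (ℓ - 1)) := by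
  have hid := sq_sub_one_mul_r ℓ k
  have hadd_dvd : ℓ + 1 ∣ 2 * (ℓ ^ 2 - 1) := ⟨2 * (ℓ - 1), by ring⟩
  have hsub_dvd : ℓ - 1 ∣ 2 * (ℓ ^ 2 - 1) := ⟨2 * (ℓ + 1), by ring⟩
  have hplus := add_one_dvd_mul_r_add hadd_dvd k
  have hminus := sub_one_dvd_mul_r_sub hsub_dvd k
  have hsign : ((-1 : ℤ) ^ ((k + 1) / 2)) ^ 2 = 1 := by rw [pow_right_comm, neg_one_sq, one_pow]
  refine ⟨hid, hplus, hminus, ?_⟩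
  apply mul_left_cancel₀ (mul_ne_zero hadd hsub)
  rw [mul_mul_mul_comm, Int.mul_ediv_cancel' hplus, Int.mul_ediv_cancel' hminus]
  linear_combination hid + hsign

theorem r_factorization_special (ℓ : ℤ) (hℓ : 2 ≤ ℓ) (k : ℕ) :
    (ℓ ^ 2 - 1) * r ((2 * (ℓ ^ 2 - 1)) ^ 2 - 2) k
        = ℓ ^ 2 * (r (2 * (ℓ ^ 2 - 1)) k) ^ 2 - 1 ∧
    (ℓ + 1) ∣ ℓ * r (2 * (ℓ ^ 2 - 1)) k + (-1 : ℤ) ^ ((k + 1) / 2) ∧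
    (ℓ - 1) ∣ ℓ * r (2 * (ℓ ^ 2 - 1)) k - (-1 : ℤ) ^ ((k + 1) / 2) ∧
    r ((2 * (ℓ ^ 2 - 1)) ^ 2 - 2) k
        = ((ℓ * r (2 * (ℓ ^ 2 - 1)) k + (-1 : ℤ) ^ ((k + 1) / 2)) / (ℓ + 1))
          * ((ℓ * r (2 * (ℓ ^ 2 - 1)) k - (-1 : ℤ) ^ ((k + 1) / 2)) / (ℓ - 1)) :=
  r_factorization_special_general ℓ (by omega) (by omega) k
end

section
/- For every integer n ≥ 2 and every k ≥ 1, if s_k(n) is a prime number, then 2k + 1 is prime. -/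
/-!
For `n = 2 cos θ` one has `s_k(n) = sin((2k+1)θ/2) / sin(θ/2)` and `T_m(n) = 2 cos(mθ)`. Hence if
`2k + 1 = (2a + 1)(2b + 1)`, multiplying and dividing by `sin((2a+1)θ/2)` gives
`s_k(n) = s_b(T_{2a+1}(n)) · s_a(n)`. Over the integers this factorization follows from the
product-to-sum formulas for `T_i · s_j`. When `n ≥ 2` and `a, b ≥ 1`, both factors exceed `1`.
-/

lemma s_add_two (n : ℤ) (k : ℕ) : s n (k + 2) = n * s n (k + 1) - s n k := rfl

lemma T_add_two (n : ℤ) (k : ℕ) : T n (k + 2) = n * T n (k + 1) - T n k := rfl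

lemma T_mul_apply_add {n : ℤ} {u : ℕ → ℤ} (hu : ∀ k, u (k + 2) = n * u (k + 1) - u k)
    (i d : ℕ) : T n i * u (d + i) = u (d + 2 * i) + u d := by
  induction i using Nat.twoStepInduction generalizing d with
  | zero => simp only [T, mul_zero, add_zero]; ring
  | one => simp only [T, mul_one, hu]; ring
  | more i ih₀ ih₁ =>
    have h₀ : T n i * u (d + i + 2) = u (d + 2 * i + 2) + u (d + 2) := by
      convert ih₀ (d + 2) using 3 <;> ring
    have h₁ : T n (i + 1) * u (d + i + 2) = u (d + 2 * i + 3) + u (d + 1) := by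
      convert ih₁ (d + 1) using 3 <;> ring
    rw [show d + (i + 2) = d + i + 2 by ring, show d + 2 * (i + 2) = d + 2 * i + 4 by ring]
    linear_combination
      u (d + i + 2) * T_add_two n i + n * h₁ - h₀ - hu (d + 2 * i + 2) - hu d

lemma T_succ_eq_s_succ_sub_s (n : ℤ) (k : ℕ) : T n (k + 1) = s n (k + 1) - s n k := by
  induction k using Nat.twoStepInduction with
  | zero => simp only [T, s]; ring
  | one => simp only [T, s]; ring
  | more k ih₀ ih₁ =>
    linear_combination
      T_add_two n (k + 1) + n * ih₁ - ih₀ - s_add_two n (k + 1) + s_add_two n k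

/-- This is `T_i s_j = s_{j+i} + s_{j-i}` for `i = a + d + 1 > j = a`, with `s_{j-i} = s_{-1-d}`
read as `-s_d`. -/
lemma T_add_add_one_mul_s (n : ℤ) (a d : ℕ) :
    T n (a + d + 1) * s n a = s n (2 * a + d + 1) - s n d := by
  induction a using Nat.twoStepInduction generalizing d with
  | zero => simpa only [s, zero_add, mul_zero, mul_one] using T_succ_eq_s_succ_sub_s n d
  | one =>
    rw [show 1 + d + 1 = d + 2 by ring, show 2 * 1 + d + 1 = d + 3 by ring,
      show s n 1 = n + 1 from rfl]
    linear_combination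
      (n + 1) * T_succ_eq_s_succ_sub_s n (d + 1) - s_add_two n (d + 1) + s_add_two n d
  | more a ih₀ ih₁ =>
    have h₀ : T n (a + d + 3) * s n a = s n (2 * a + d + 3) - s n (d + 2) := ih₀ (d + 2)
    have h₁ : T n (a + d + 3) * s n (a + 1) = s n (2 * a + d + 4) - s n (d + 1) := by
      convert ih₁ (d + 1) using 3 <;> ring
    rw [show a + 2 + d + 1 = a + d + 3 by ring, show 2 * (a + 2) + d + 1 = 2 * a + d + 5 by ring]
    linear_combination T n (a + d + 3) * s_add_two n a + n * h₁ - h₀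
      - s_add_two n (2 * a + d + 3) + s_add_two n d

lemma s_add_mul_two_mul_add_one (n : ℤ) (a b : ℕ) :
    s n (a + b * (2 * a + 1)) = s (T n (2 * a + 1)) b * s n a := by
  induction b using Nat.twoStepInduction with
  | zero => simp only [s, zero_mul, add_zero, one_mul]
  | one =>
    have h : T n (2 * a + 1) * s n a = s n (a + 1 * (2 * a + 1)) - s n a := by
      convert T_add_add_one_mul_s n a a using 3 <;> ring
    simp only [s]
    linear_combination -h
  | more b ih₀ ih₁ =>
    have h := T_mul_apply_add (s_add_two n) (2 * a + 1) (a + b * (2 * a + 1))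
    rw [show a + b * (2 * a + 1) + (2 * a + 1) = a + (b + 1) * (2 * a + 1) by ring,
      show a + b * (2 * a + 1) + 2 * (2 * a + 1) = a + (b + 2) * (2 * a + 1) by ring] at h
    rw [s_add_two]
    linear_combination T n (2 * a + 1) * ih₁ - ih₀ - h

lemma monotone_of_add_two_eq_mul_sub {R : Type*} [CommRing R] [LinearOrder R]
    [IsStrictOrderedRing R] {x : R} {u : ℕ → R} (hx : 2 ≤ x)
    (hu : ∀ k, u (k + 2) = x * u (k + 1) - u k) (h₀ : 0 ≤ u 0) (h₁ : u 0 ≤ u 1) :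
    Monotone u := by
  have hnonneg_and_le : ∀ k, 0 ≤ u k ∧ u k ≤ u (k + 1) := by
    intro k
    induction k with
    | zero => exact ⟨h₀, h₁⟩
    | succ k ih =>
      obtain ⟨hnonneg, hle⟩ := ih
      refine ⟨hnonneg.trans hle, ?_⟩
      have hconvex : 0 ≤ (x - 2) * u (k + 1) :=
        mul_nonneg (sub_nonneg.mpr hx) (hnonneg.trans hle)
      linarith [hu k]
  exact monotone_nat_of_le_succ fun k => (hnonneg_and_le k).2

lemma one_lt_s {n : ℤ} (hn : 2 ≤ n) {k : ℕ} (hk : 0 < k) : 1 < s n k := by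
  have hmono : Monotone (s n) :=
    monotone_of_add_two_eq_mul_sub hn (s_add_two n) (by simp only [s]; omega)
      (by simp only [s]; omega)
  calc 1 < n + 1 := by omega
    _ = s n 1 := rfl
    _ ≤ s n k := hmono hk

lemma two_le_T {n : ℤ} (hn : 2 ≤ n) (k : ℕ) : 2 ≤ T n k :=
  monotone_of_add_two_eq_mul_sub hn (T_add_two n) zero_le_two hn k.zero_le

theorem s_prime_implies_index_prime (n : ℤ) (hn : 2 ≤ n) (k : ℕ) (hk : 1 ≤ k)
    (h : Prime (s n k)) : Nat.Prime (2 * k + 1) := by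
  by_contra hcomp
  obtain ⟨x, ⟨y, hxy⟩, hx, hxk⟩ := Nat.exists_dvd_of_not_prime2 (by omega) hcomp
  have hodd : Odd (x * y) := hxy ▸ odd_two_mul_add_one k
  obtain ⟨⟨a, rfl⟩, ⟨b, rfl⟩⟩ := Nat.odd_mul.mp hodd
  have hk_eq : k = a + b * (2 * a + 1) := by linarith
  have ha : 0 < a := by omega
  have hb : 0 < b := Nat.pos_of_ne_zero (by rintro rfl; omega)
  have hs_a : 1 < s n a := one_lt_s hn ha
  have hs_b : 1 < s (T n (2 * a + 1)) b := one_lt_s (two_le_T hn _) hb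
  rw [hk_eq, s_add_mul_two_mul_add_one] at h
  rcases h.irreducible.isUnit_or_isUnit rfl with hu | hu <;>
    rcases Int.isUnit_iff.mp hu with hu | hu <;> omega
end

section
/- For every integer n and every j ≥ 0, s_{2j}(n) + 1 = s_j(n) · T_j(n) and s_{2j+1}(n) − 1 = s_j(n) · T_{j+1}(n). -/
theorem T_smul_eq_add_of_recurrence {M : Type*} [AddCommGroup M] {n : ℤ} {u : ℕ → M}
    (hu : ∀ k, u (k + 2) = n • u (k + 1) - u k) (j : ℕ) :
    T n j • u j = u (2 * j) + u 0 := by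
  induction j using Nat.twoStepInduction generalizing u with
  | zero => exact two_zsmul (u 0)
  | one => exact eq_add_of_sub_eq (hu 0).symm
  | more j ih₀ ih₁ =>
    -- Shifts of `u` are again solutions; the shifts by 2 and 1 bring `u (j + 2)` into range.
    have shift_two : T n j • u (j + 2) = u (2 * j + 2) + u 2 :=
      ih₀ (u := fun k ↦ u (k + 2)) fun k ↦ hu (k + 2)
    have shift_one : T n (j + 1) • u (j + 2) = u (2 * j + 3) + u 1 :=
      ih₁ (u := fun k ↦ u (k + 1)) fun k ↦ hu (k + 1)
    calc T n (j + 2) • u (j + 2)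
        = n • T n (j + 1) • u (j + 2) - T n j • u (j + 2) := by rw [T, sub_smul, mul_smul]
      _ = (n • u (2 * j + 3) - u (2 * j + 2)) + (n • u 1 - u 2) := by
          rw [shift_one, shift_two, smul_add, add_sub_add_comm]
      _ = u (2 * (j + 2)) + u 0 := by
          rw [← hu (2 * j + 2), hu 0, zero_add, sub_sub_cancel, mul_add]

/-- The sequence `s` extended one step backwards along its recurrence: the entry at index `k` is
`s_{k-1}(n)`, with `s_{-1}(n) = -1`. -/
def sPred (n : ℤ) : ℕ → ℤ
  | 0 => -1
  | k + 1 => s n k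

theorem sPred_add_two (n : ℤ) : ∀ k, sPred n (k + 2) = n * sPred n (k + 1) - sPred n k
  | 0 => by simp only [sPred, s, mul_one, sub_neg_eq_add]
  | _ + 1 => rfl

theorem s_plus_minus_one_factorizations (n : ℤ) (j : ℕ) :
    s n (2 * j) + 1 = s n j * T n j ∧ s n (2 * j + 1) - 1 = s n j * T n (j + 1) := by
  have even_index : T n j * s n j = s n (2 * j) + 1 :=
    T_smul_eq_add_of_recurrence (u := s n) (fun _ ↦ rfl) j
  have odd_index : T n (j + 1) * s n j = s n (2 * j + 1) - 1 :=
    T_smul_eq_add_of_recurrence (sPred_add_two n) (j + 1)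
  exact ⟨even_index.symm.trans (mul_comm _ _), odd_index.symm.trans (mul_comm _ _)⟩
end
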